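/- If u ∈ 𝒜₂ and v, w ∈ 𝒜₁, then there is a constant c_* ≥ 1, depending only on the C²-norms ‖u‖₂, ‖v‖₂, ‖w‖₂ (and independent of α₀, H₁, H₂), such that ‖∂^α(uvw)‖₀ ≤ c_* H₁^{α₁} H₂^{α₂} [(|α|−1)!]^s for every α = (α₁,α₂) ≤ α₀ with |α| ≥ 1 (i.e. c_*^{−1} uvw ∈ 𝒜₀). -/

import Mathlib

open Set

noncomputable section

/-- The closed strip `R̄ = ℝ × [p₀, 0]`. -/
def Strip (p₀ : ℝ) : Set (ℝ × ℝ) := {z : ℝ × ℝ | p₀ ≤ z.2 ∧ z.2 ≤ 0}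

/-- The mixed partial derivative `∂_q^a ∂_p^b f` of `f : ℝ² → ℝ` within the set `S`,
realized as the iterated Fréchet derivative within `S` applied to the corresponding
coordinate directions. -/
def mpw (S : Set (ℝ × ℝ)) (a b : ℕ) (f : ℝ × ℝ → ℝ) (z : ℝ × ℝ) : ℝ :=
  iteratedFDerivWithin ℝ (a + b) f S z
    (fun i => if (i : ℕ) < a then ((1 : ℝ), (0 : ℝ)) else ((0 : ℝ), (1 : ℝ)))

/-- `∂_q^a ∂_p^b f` within the strip `R̄`. -/
def pd (p₀ : ℝ) (a b : ℕ) (f : ℝ × ℝ → ℝ) : ℝ × ℝ → ℝ := mpw (Strip p₀) a b f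

/-- Euclidean distance on `ℝ²`. -/
def edist2 (z z' : ℝ × ℝ) : ℝ := Real.sqrt ((z.1 - z'.1) ^ 2 + (z.2 - z'.2) ^ 2)

/-- `sup_{R̄} |f|`. -/
def supS (p₀ : ℝ) (f : ℝ × ℝ → ℝ) : ℝ := sSup ((fun z => |f z|) '' Strip p₀)

/-- The Hölder seminorm of exponent `μ` of `f` over the strip `R̄`. -/
def hsemi (p₀ μ : ℝ) (f : ℝ × ℝ → ℝ) : ℝ :=
  sSup {y | ∃ z ∈ Strip p₀, ∃ z' ∈ Strip p₀, z ≠ z' ∧ y = |f z - f z'| / (edist2 z z') ^ μ}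

/-- The `C^k` sup-norm `‖f‖_k = Σ_{|α| ≤ k} sup_{R̄} |∂^α f|`. -/
def cknorm (p₀ : ℝ) (k : ℕ) (f : ℝ × ℝ → ℝ) : ℝ :=
  ∑ a ∈ Finset.range (k + 1), ∑ b ∈ Finset.range (k + 1 - a), supS p₀ (pd p₀ a b f)

/-- The Hölder norm `‖f‖_{k,μ} = ‖f‖_k + max_{|α| = k} [∂^α f]_μ`. -/
def hnorm (p₀ μ : ℝ) (k : ℕ) (f : ℝ × ℝ → ℝ) : ℝ :=
  cknorm p₀ k f + sSup {y | ∃ a b : ℕ, a + b = k ∧ y = hsemi p₀ μ (pd p₀ a b f)}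

/-- Boundedness of `f` on the strip (finiteness of `sup_{R̄} |f|`). -/
def bddS (p₀ : ℝ) (f : ℝ × ℝ → ℝ) : Prop := BddAbove ((fun z => |f z|) '' Strip p₀)

/-- Finiteness of the Hölder seminorm of `f` on the strip. -/
def bddH (p₀ μ : ℝ) (f : ℝ × ℝ → ℝ) : Prop :=
  BddAbove {y | ∃ z ∈ Strip p₀, ∃ z' ∈ Strip p₀, z ≠ z' ∧ y = |f z - f z'| / (edist2 z z') ^ μ}

/-- Finiteness of the `C^{k,μ}(R̄)` norm. -/
def finCk (p₀ μ : ℝ) (k : ℕ) (f : ℝ × ℝ → ℝ) : Prop :=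
  (∀ a b : ℕ, a + b ≤ k → bddS p₀ (pd p₀ a b f)) ∧
  (∀ a b : ℕ, a + b = k → bddH p₀ μ (pd p₀ a b f))

/-- Membership in `C^{k,μ}(R̄)`: `k` times continuously differentiable on the strip with
bounded derivatives, the top-order ones Hölder continuous of exponent `μ`. -/
def MemCk (p₀ μ : ℝ) (k : ℕ) (f : ℝ × ℝ → ℝ) : Prop :=
  ContDiffOn ℝ k f (Strip p₀) ∧ finCk p₀ μ k f

/-- The class `𝒜_j`: functions `f ∈ C^{|α₀|,μ}(R̄)` such that
`‖∂^α f‖₀ ≤ H₁^{α₁−j} H₂^{α₂} [(|α|−j−1)!]^s` for every `α ≤ α₀` with `|α| ≥ j+1`. -/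
def memA (p₀ μ s H₁ H₂ : ℝ) (α₀ : ℕ × ℕ) (j : ℕ) (f : ℝ × ℝ → ℝ) : Prop :=
  MemCk p₀ μ (α₀.1 + α₀.2) f ∧
  ∀ a b : ℕ, a ≤ α₀.1 → b ≤ α₀.2 → j + 1 ≤ a + b →
    ∀ z ∈ Strip p₀, |pd p₀ a b f z| ≤
      H₁ ^ ((a : ℤ) - (j : ℤ)) * H₂ ^ b * (Nat.factorial (a + b - (j + 1)) : ℝ) ^ s

/-!
Replace the bound `[(n - 2)!]^s` by the comparable weight `[n! / (n + 1)²]^s`. Convolving this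
weight with itself against binomial coefficients reproduces it up to a constant, since
`∑ (k + 1)⁻² < ∞`; the exponent `s ≥ 1` is harmless because `x ↦ x ^ s` is superadditive on
`[0, ∞)`. By the Leibniz rule, functions whose derivatives are dominated by the weight therefore
form an algebra, and `n! / (n + 1)² ≤ (n - 1)!` brings the factorials back.
-/

theorem sum_rpow_le_rpow_sum {ι : Type*} (t : Finset ι) {f : ι → ℝ} (hf : ∀ i ∈ t, 0 ≤ f i)
    {s : ℝ} (hs : 1 ≤ s) : ∑ i ∈ t, f i ^ s ≤ (∑ i ∈ t, f i) ^ s := by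
  have rpow_eq {x : ℝ} (hx : 0 ≤ x) : x ^ s = x * x ^ (s - 1) := by
    rw [← Real.rpow_one_add' hx (by linarith), add_sub_cancel]
  rw [rpow_eq (Finset.sum_nonneg hf), Finset.sum_mul]
  refine Finset.sum_le_sum fun i hi => ?_
  rw [rpow_eq (hf i hi)]
  have hi_le : f i ≤ ∑ k ∈ t, f k := Finset.single_le_sum hf hi
  have hi_nonneg := hf i hi
  gcongr

section BinomConv

open Finset.HasAntidiagonal (antidiagonal mem_antidiagonal)

/-- The binomial convolution of two sequences, i.e. the product of their exponential generating
functions. It records how majorants of the derivatives of `f` and `g` combine under the Leibniz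
rule. -/
def binomConv {R : Type*} [CommSemiring R] (F G : ℕ → R) (n : ℕ) : R :=
  ∑ p ∈ antidiagonal n, (n.choose p.1 : R) * (F p.1 * G p.2)

variable {R : Type*} [CommSemiring R]

theorem binomConv_zero (F G : ℕ → R) : binomConv F G 0 = F 0 * G 0 := by
  simp [binomConv]

theorem binomConv_succ (F G : ℕ → R) (n : ℕ) :
    binomConv F G (n + 1) =
      binomConv (fun k => F (k + 1)) G n + binomConv F (fun k => G (k + 1)) n := by
  unfold binomConv
  rw [Finset.sum_antidiagonal_choose_succ_mul (fun i j => F i * G j), add_comm]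
  congr 1
  refine Finset.sum_congr rfl fun p hp => ?_
  rw [← mem_antidiagonal.1 hp, Nat.choose_symm_add]

theorem binomConv_const_mul_left (c : R) (F G : ℕ → R) (n : ℕ) :
    binomConv (fun k => c * F k) G n = c * binomConv F G n := by
  simp only [binomConv, Finset.mul_sum]
  exact Finset.sum_congr rfl fun _ _ => by ring

theorem binomConv_const_mul_right (c : R) (F G : ℕ → R) (n : ℕ) :
    binomConv F (fun k => c * G k) n = c * binomConv F G n := by
  simp only [binomConv, Finset.mul_sum]
  exact Finset.sum_congr rfl fun _ _ => by ring

theorem binomConv_rpow_le {F G : ℕ → ℝ} (hF : ∀ n, 0 ≤ F n) (hG : ∀ n, 0 ≤ G n)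
    {s : ℝ} (hs : 1 ≤ s) (n : ℕ) :
    binomConv (fun k => F k ^ s) (fun k => G k ^ s) n ≤ binomConv F G n ^ s := by
  have hFG (p : ℕ × ℕ) : 0 ≤ F p.1 * G p.2 := mul_nonneg (hF _) (hG _)
  refine le_trans (Finset.sum_le_sum fun p hp => ?_)
    (sum_rpow_le_rpow_sum _ (fun p _ => mul_nonneg (Nat.cast_nonneg _) (hFG p)) hs)
  have hchoose : (1 : ℝ) ≤ n.choose p.1 := by
    exact_mod_cast Nat.choose_pos (Finset.HasAntidiagonal.antidiagonal.fst_le hp)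
  rw [Real.mul_rpow (Nat.cast_nonneg _) (hFG p), Real.mul_rpow (hF _) (hG _)]
  exact mul_le_mul_of_nonneg_right (Real.self_le_rpow_of_one_le hchoose hs)
    (mul_nonneg (Real.rpow_nonneg (hF _) _) (Real.rpow_nonneg (hG _) _))

end BinomConv

section GevreyWeight

open Finset.HasAntidiagonal (antidiagonal mem_antidiagonal)

/-- The regularized factorial `n! / (n + 1)²`. It is comparable to the factorials `(n - j - 1)!`
in the definition of `𝒜_j` up to a factor of order `n ^ (j - 1)`, and, unlike these, is
reproduced up to a constant by binomial convolution. -/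
def gevreyWeight (n : ℕ) : ℝ := (n.factorial : ℝ) / ((n : ℝ) + 1) ^ 2

theorem gevreyWeight_nonneg (n : ℕ) : 0 ≤ gevreyWeight n := by
  unfold gevreyWeight
  positivity

theorem gevreyWeight_succ_le_factorial (n : ℕ) : gevreyWeight (n + 1) ≤ n.factorial := by
  rw [gevreyWeight, div_le_iff₀ (by positivity), Nat.factorial_succ, Nat.cast_mul, mul_comm]
  gcongr
  push_cast
  nlinarith [sq_nonneg (n : ℝ)]

theorem factorial_sub_two_le_gevreyWeight (n : ℕ) :
    ((n - 2).factorial : ℝ) ≤ 5 * gevreyWeight n := by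
  rw [gevreyWeight, ← mul_div_assoc, le_div_iff₀ (by positivity)]
  match n with
  | 0 => norm_num
  | 1 => norm_num
  | n + 2 =>
    have hsq : ((n : ℝ) + 2 + 1) ^ 2 ≤ 5 * ((n + 2) * (n + 1)) := by
      nlinarith [(n.cast_nonneg : (0 : ℝ) ≤ n)]
    calc ((n + 2 - 2).factorial : ℝ) * (((n + 2 : ℕ) : ℝ) + 1) ^ 2
        = (n.factorial : ℝ) * ((n : ℝ) + 2 + 1) ^ 2 := by push_cast; ring
      _ ≤ (n.factorial : ℝ) * (5 * ((n + 2) * (n + 1))) := by gcongr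
      _ = 5 * ((n + 2).factorial : ℝ) := by simp only [Nat.factorial_succ]; push_cast; ring

theorem sum_antidiagonal_inv_succ_sq_le (n : ℕ) :
    ∑ p ∈ antidiagonal n, (((p.1 : ℝ) + 1) ^ 2)⁻¹ ≤ 2 := by
  rw [Finset.Nat.sum_antidiagonal_eq_sum_range_succ_mk]
  calc ∑ k ∈ Finset.range (n + 1), (((k : ℝ) + 1) ^ 2)⁻¹
      = ∑ k ∈ Finset.Ioo 0 (n + 2), ((k : ℝ) ^ 2)⁻¹ := by
        rw [Finset.range_eq_Ico]
        have := Finset.sum_Ico_add' (fun k : ℕ => ((k : ℝ) ^ 2)⁻¹) 0 (n + 1) 1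
        push_cast at this
        exact this
    _ ≤ 2 := by simpa using sum_Ioo_inv_sq_le (α := ℝ) 0 (n + 2)

theorem choose_mul_gevreyWeight_mul_le (i j : ℕ) :
    ((i + j).choose i : ℝ) * (gevreyWeight i * gevreyWeight j) ≤
      2 * gevreyWeight (i + j) * ((((i : ℝ) + 1) ^ 2)⁻¹ + (((j : ℝ) + 1) ^ 2)⁻¹) := by
  set x : ℝ := i + 1 with hx
  set y : ℝ := j + 1 with hy
  have hx0 : 0 < x := by positivity
  have hy0 : 0 < y := by positivity
  have hxy : 0 < x + y - 1 := by rw [hx, hy]; ring_nf; positivity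
  have hsq : (x + y - 1) ^ 2 ≤ 2 * (x ^ 2 + y ^ 2) := by
    nlinarith [sq_nonneg (x - y)]
  calc ((i + j).choose i : ℝ) * (gevreyWeight i * gevreyWeight j)
      = (i + j).factorial / (x ^ 2 * y ^ 2) := by
        rw [Nat.cast_add_choose, gevreyWeight, gevreyWeight, ← hx, ← hy]; field_simp
    _ ≤ (i + j).factorial / (x ^ 2 * y ^ 2) * (2 * (x ^ 2 + y ^ 2) / (x + y - 1) ^ 2) :=
        le_mul_of_one_le_right (by positivity) ((one_le_div (by positivity)).2 hsq)
    _ = 2 * gevreyWeight (i + j) * ((x ^ 2)⁻¹ + (y ^ 2)⁻¹) := by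
        rw [gevreyWeight, show ((i + j : ℕ) : ℝ) + 1 = x + y - 1 by rw [hx, hy]; push_cast; ring]
        field_simp
        ring

theorem binomConv_gevreyWeight_le (n : ℕ) :
    binomConv gevreyWeight gevreyWeight n ≤ 8 * gevreyWeight n := by
  have hsnd : ∑ p ∈ antidiagonal n, (((p.2 : ℝ) + 1) ^ 2)⁻¹ ≤ 2 := by
    rw [← Finset.Nat.sum_antidiagonal_swap]
    exact sum_antidiagonal_inv_succ_sq_le n
  calc binomConv gevreyWeight gevreyWeight n
      ≤ ∑ p ∈ antidiagonal n,
          2 * gevreyWeight n * ((((p.1 : ℝ) + 1) ^ 2)⁻¹ + (((p.2 : ℝ) + 1) ^ 2)⁻¹) := by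
        refine Finset.sum_le_sum fun p hp => ?_
        rw [← mem_antidiagonal.1 hp]
        exact choose_mul_gevreyWeight_mul_le p.1 p.2
    _ ≤ 2 * gevreyWeight n * (2 + 2) := by
        rw [← Finset.mul_sum, Finset.sum_add_distrib]
        have := gevreyWeight_nonneg n
        gcongr
        exact sum_antidiagonal_inv_succ_sq_le n
    _ = 8 * gevreyWeight n := by ring

theorem binomConv_gevreyWeight_rpow_le {s : ℝ} (hs : 1 ≤ s) (n : ℕ) :
    binomConv (fun k => gevreyWeight k ^ s) (fun k => gevreyWeight k ^ s) n ≤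
      8 ^ s * gevreyWeight n ^ s := by
  have hconv_nonneg : 0 ≤ binomConv gevreyWeight gevreyWeight n :=
    Finset.sum_nonneg fun p _ =>
      mul_nonneg (Nat.cast_nonneg _) (mul_nonneg (gevreyWeight_nonneg _) (gevreyWeight_nonneg _))
  calc binomConv (fun k => gevreyWeight k ^ s) (fun k => gevreyWeight k ^ s) n
      ≤ binomConv gevreyWeight gevreyWeight n ^ s :=
        binomConv_rpow_le gevreyWeight_nonneg gevreyWeight_nonneg hs n
    _ ≤ (8 * gevreyWeight n) ^ s :=
        Real.rpow_le_rpow hconv_nonneg (binomConv_gevreyWeight_le n) (by linarith)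
    _ = 8 ^ s * gevreyWeight n ^ s := Real.mul_rpow (by norm_num) (gevreyWeight_nonneg n)

end GevreyWeight

section DirDerivWithin

variable {𝕜 E F : Type*} [NontriviallyNormedField 𝕜] [NormedAddCommGroup E] [NormedSpace 𝕜 E]
  [NormedAddCommGroup F] [NormedSpace 𝕜 F]

variable (𝕜) in
/-- The derivative of `f` within `S` in the direction `v`, defined through the Fréchet derivative
within `S`. -/
def dirDerivWithin (S : Set E) (v : E) (f : E → F) (z : E) : F :=
  fderivWithin 𝕜 f S z v

variable {S : Set E} {f : E → F} {z : E}

theorem contDiffOn_dirDerivWithin {m n : WithTop ℕ∞} (hS : UniqueDiffOn 𝕜 S)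
    (hf : ContDiffOn 𝕜 n f S) (hmn : m + 1 ≤ n) (v : E) :
    ContDiffOn 𝕜 m (dirDerivWithin 𝕜 S v f) S :=
  (hf.fderivWithin hS hmn).clm_apply contDiffOn_const

theorem iteratedFDerivWithin_succ_apply_dirDerivWithin {n : ℕ} (hS : UniqueDiffOn 𝕜 S)
    (hf : ContDiffOn 𝕜 (n + 1 : ℕ) f S) (hz : z ∈ S) (m : Fin (n + 1) → E) :
    iteratedFDerivWithin 𝕜 (n + 1) f S z m =
      iteratedFDerivWithin 𝕜 n (dirDerivWithin 𝕜 S (m (Fin.last n)) f) S z (Fin.init m) := by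
  rw [iteratedFDerivWithin_succ_apply_right hS hz]
  exact (iteratedFDerivWithin_clm_apply_const_apply hS
    (hf.fderivWithin hS (m := n) (by norm_cast)) le_rfl hz).symm

end DirDerivWithin

section MixedPartials

variable {S : Set (ℝ × ℝ)} {f g : ℝ × ℝ → ℝ} {z : ℝ × ℝ} {a b n : ℕ}

theorem mpw_zero_zero : mpw S 0 0 f z = f z := by
  simp [mpw]

theorem mpw_succ_right (hS : UniqueDiffOn ℝ S) (hf : ContDiffOn ℝ (a + b + 1 : ℕ) f S)
    (hz : z ∈ S) : mpw S a (b + 1) f z = mpw S a b (dirDerivWithin ℝ S (0, 1) f) z := by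
  refine (iteratedFDerivWithin_succ_apply_dirDerivWithin (n := a + b) hS hf hz _).trans ?_
  simp only [mpw, Fin.val_last, not_lt.2 (Nat.le_add_right a b), if_false]
  rfl

theorem mpw_succ_zero (hS : UniqueDiffOn ℝ S) (hf : ContDiffOn ℝ (a + 1 : ℕ) f S)
    (hz : z ∈ S) : mpw S (a + 1) 0 f z = mpw S a 0 (dirDerivWithin ℝ S (1, 0) f) z := by
  refine (iteratedFDerivWithin_succ_apply_dirDerivWithin (n := a) hS hf hz _).trans ?_
  simp only [mpw, Nat.add_zero, Fin.is_lt, if_true]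
  rfl

theorem mpw_dirDerivWithin_mul (hS : UniqueDiffOn ℝ S) (hf : ContDiffOn ℝ (a + b + 1 : ℕ) f S)
    (hg : ContDiffOn ℝ (a + b + 1 : ℕ) g S) (hz : z ∈ S) (v : ℝ × ℝ) :
    mpw S a b (dirDerivWithin ℝ S v fun y => f y * g y) z =
      mpw S a b (fun y => dirDerivWithin ℝ S v f y * g y) z +
        mpw S a b (fun y => f y * dirDerivWithin ℝ S v g y) z := by
  have hf' := contDiffOn_dirDerivWithin (m := (a + b : ℕ)) hS hf (by norm_cast) v
  have hg' := contDiffOn_dirDerivWithin (m := (a + b : ℕ)) hS hg (by norm_cast) v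
  have hle : ((a + b : ℕ) : WithTop ℕ∞) ≤ (a + b + 1 : ℕ) := by norm_cast; omega
  have product_rule : EqOn (dirDerivWithin ℝ S v fun y => f y * g y)
      (fun y => dirDerivWithin ℝ S v f y * g y + f y * dirDerivWithin ℝ S v g y) S := by
    intro y hy
    have hfy := hf.differentiableOn (by norm_cast) y hy
    have hgy := hg.differentiableOn (by norm_cast) y hy
    simp only [dirDerivWithin, fderivWithin_fun_mul (hS y hy) hfy hgy,
      add_apply, smul_apply, smul_eq_mul]
    ring
  unfold mpw
  rw [iteratedFDerivWithin_congr product_rule hz,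
    fun_iteratedFDerivWithin_add_apply ((hf'.mul (hg.of_le hle)) z hz)
      (((hf.of_le hle).mul hg') z hz) hS hz,
    add_apply]

theorem abs_mpw_dirDerivWithin_mul_le (hS : UniqueDiffOn ℝ S)
    (hf : ContDiffOn ℝ (a + b + 1 : ℕ) f S) (hg : ContDiffOn ℝ (a + b + 1 : ℕ) g S) (hz : z ∈ S)
    (v : ℝ × ℝ) {F G : ℕ → ℝ} {H W : ℝ}
    (hfg : |mpw S a b (fun y => dirDerivWithin ℝ S v f y * g y) z| ≤
      binomConv (fun k => H * F (k + 1)) G n * W)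
    (hgf : |mpw S a b (fun y => f y * dirDerivWithin ℝ S v g y) z| ≤
      binomConv F (fun k => H * G (k + 1)) n * W) :
    |mpw S a b (dirDerivWithin ℝ S v fun y => f y * g y) z| ≤ binomConv F G (n + 1) * (H * W) := by
  rw [mpw_dirDerivWithin_mul hS hf hg hz v]
  refine (abs_add_le _ _).trans ((add_le_add hfg hgf).trans_eq ?_)
  rw [binomConv_succ, binomConv_const_mul_left, binomConv_const_mul_right]
  ring

theorem abs_mpw_zero_mul_le (hS : UniqueDiffOn ℝ S) (hz : z ∈ S) {H : ℝ} {F G : ℕ → ℝ}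
    (hf : ContDiffOn ℝ a f S) (hg : ContDiffOn ℝ a g S)
    (hF : ∀ i ≤ a, |mpw S i 0 f z| ≤ F i * H ^ i)
    (hG : ∀ i ≤ a, |mpw S i 0 g z| ≤ G i * H ^ i) :
    |mpw S a 0 (fun y => f y * g y) z| ≤ binomConv F G a * H ^ a := by
  induction a generalizing f g F G with
  | zero =>
    have hF₀ : |f z| ≤ F 0 := by simpa [mpw_zero_zero] using hF 0 le_rfl
    have hG₀ : |g z| ≤ G 0 := by simpa [mpw_zero_zero] using hG 0 le_rfl
    rw [mpw_zero_zero, binomConv_zero, pow_zero, mul_one, abs_mul]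
    exact mul_le_mul hF₀ hG₀ (abs_nonneg _) ((abs_nonneg _).trans hF₀)
  | succ a ih =>
    have hle : (a : WithTop ℕ∞) ≤ (a + 1 : ℕ) := by norm_cast; omega
    have bound_deriv {h : ℝ × ℝ → ℝ} {E : ℕ → ℝ} (hh : ContDiffOn ℝ (a + 1 : ℕ) h S)
        (hE : ∀ i ≤ a + 1, |mpw S i 0 h z| ≤ E i * H ^ i) :
        ∀ i ≤ a, |mpw S i 0 (dirDerivWithin ℝ S (1, 0) h) z| ≤ H * E (i + 1) * H ^ i := by
      intro i hi
      rw [← mpw_succ_zero hS (hh.of_le (by norm_cast; omega)) hz]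
      exact (hE (i + 1) (by omega)).trans_eq (by ring)
    rw [mpw_succ_zero hS (hf.mul hg) hz, pow_succ']
    exact abs_mpw_dirDerivWithin_mul_le hS hf hg hz (1, 0)
      (ih (F := fun k => H * F (k + 1))
        (contDiffOn_dirDerivWithin hS hf (by norm_cast) _) (hg.of_le hle)
        (bound_deriv hf hF) fun i hi => hG i (by omega))
      (ih (G := fun k => H * G (k + 1)) (hf.of_le hle)
        (contDiffOn_dirDerivWithin hS hg (by norm_cast) _)
        (fun i hi => hF i (by omega)) (bound_deriv hg hG))

/- Peeling off the innermost derivative and applying Pascal's rule to the majorants avoids the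
two-index Leibniz formula and the Vandermonde identity that would collapse it. -/
theorem abs_mpw_mul_le (hS : UniqueDiffOn ℝ S) (hz : z ∈ S) {H₁ H₂ : ℝ} {F G : ℕ → ℝ}
    (hf : ContDiffOn ℝ (a + b : ℕ) f S) (hg : ContDiffOn ℝ (a + b : ℕ) g S)
    (hF : ∀ i ≤ a, ∀ j ≤ b, |mpw S i j f z| ≤ F (i + j) * (H₁ ^ i * H₂ ^ j))
    (hG : ∀ i ≤ a, ∀ j ≤ b, |mpw S i j g z| ≤ G (i + j) * (H₁ ^ i * H₂ ^ j)) :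
    |mpw S a b (fun y => f y * g y) z| ≤ binomConv F G (a + b) * (H₁ ^ a * H₂ ^ b) := by
  induction b generalizing f g F G with
  | zero =>
    simpa using abs_mpw_zero_mul_le (F := F) (G := G) hS hz hf hg
      (fun i hi => by simpa using hF i hi 0 le_rfl) (fun i hi => by simpa using hG i hi 0 le_rfl)
  | succ b ih =>
    have hle : ((a + b : ℕ) : WithTop ℕ∞) ≤ (a + b + 1 : ℕ) := by norm_cast; omega
    have bound_deriv {h : ℝ × ℝ → ℝ} {E : ℕ → ℝ} (hh : ContDiffOn ℝ (a + b + 1 : ℕ) h S)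
        (hE : ∀ i ≤ a, ∀ j ≤ b + 1, |mpw S i j h z| ≤ E (i + j) * (H₁ ^ i * H₂ ^ j)) :
        ∀ i ≤ a, ∀ j ≤ b, |mpw S i j (dirDerivWithin ℝ S (0, 1) h) z| ≤
          H₂ * E (i + j + 1) * (H₁ ^ i * H₂ ^ j) := by
      intro i hi j hj
      rw [← mpw_succ_right hS (hh.of_le (by norm_cast; omega)) hz]
      exact (hE i hi (j + 1) (by omega)).trans_eq (by ring_nf)
    rw [mpw_succ_right hS (hf.mul hg) hz, pow_succ', mul_left_comm (H₁ ^ a)]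
    exact abs_mpw_dirDerivWithin_mul_le hS hf hg hz (0, 1)
      (ih (F := fun k => H₂ * F (k + 1))
        (contDiffOn_dirDerivWithin hS hf (by norm_cast) _) (hg.of_le hle)
        (bound_deriv hf hF) fun i hi j hj => hG i hi j (by omega))
      (ih (G := fun k => H₂ * G (k + 1)) (hf.of_le hle)
        (contDiffOn_dirDerivWithin hS hg (by norm_cast) _)
        (fun i hi j hj => hF i hi j (by omega)) (bound_deriv hg hG))

end MixedPartials

section GevreyBound

/-- The derivatives of `f` of multi-index `(a, b) ≤ α₀` are dominated on `S` by `M` times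
`gevreyWeight (a + b) ^ s * H₁ ^ a * H₂ ^ b`. This replaces membership in the classes `𝒜_j` by a
condition stable under products. -/
def GevreyBound (S : Set (ℝ × ℝ)) (s H₁ H₂ : ℝ) (α₀ : ℕ × ℕ) (M : ℝ) (f : ℝ × ℝ → ℝ) : Prop :=
  ∀ a ≤ α₀.1, ∀ b ≤ α₀.2, ∀ z ∈ S,
    |mpw S a b f z| ≤ M * gevreyWeight (a + b) ^ s * (H₁ ^ a * H₂ ^ b)

theorem GevreyBound.mul {S : Set (ℝ × ℝ)} (hS : UniqueDiffOn ℝ S) {s H₁ H₂ : ℝ} (hs : 1 ≤ s)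
    (hH₁ : 0 ≤ H₁) (hH₂ : 0 ≤ H₂) {α₀ : ℕ × ℕ} {M N : ℝ} (hM : 0 ≤ M) (hN : 0 ≤ N)
    {f g : ℝ × ℝ → ℝ} (hf : ContDiffOn ℝ (α₀.1 + α₀.2 : ℕ) f S)
    (hg : ContDiffOn ℝ (α₀.1 + α₀.2 : ℕ) g S)
    (hfM : GevreyBound S s H₁ H₂ α₀ M f) (hgN : GevreyBound S s H₁ H₂ α₀ N g) :
    GevreyBound S s H₁ H₂ α₀ (8 ^ s * M * N) fun y => f y * g y := by
  intro a ha b hb z hz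
  have hle : ((a + b : ℕ) : WithTop ℕ∞) ≤ (α₀.1 + α₀.2 : ℕ) := by norm_cast; omega
  refine (abs_mpw_mul_le (F := fun k => M * gevreyWeight k ^ s)
    (G := fun k => N * gevreyWeight k ^ s) hS hz (hf.of_le hle) (hg.of_le hle)
    (fun i hi j hj => hfM i (hi.trans ha) j (hj.trans hb) z hz)
    (fun i hi j hj => hgN i (hi.trans ha) j (hj.trans hb) z hz)).trans ?_
  gcongr
  rw [binomConv_const_mul_left M, binomConv_const_mul_right N]
  calc M * (N * binomConv (fun k => gevreyWeight k ^ s) (fun k => gevreyWeight k ^ s) (a + b))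
      ≤ M * (N * (8 ^ s * gevreyWeight (a + b) ^ s)) := by
        gcongr
        exact binomConv_gevreyWeight_rpow_le hs (a + b)
    _ = 8 ^ s * M * N * gevreyWeight (a + b) ^ s := by ring

theorem GevreyBound.abs_mpw_le_factorial {S : Set (ℝ × ℝ)} {s H₁ H₂ : ℝ} (hs : 0 ≤ s)
    (hH₁ : 0 ≤ H₁) (hH₂ : 0 ≤ H₂) {α₀ : ℕ × ℕ} {M : ℝ} (hM : 0 ≤ M) {f : ℝ × ℝ → ℝ}
    (hfM : GevreyBound S s H₁ H₂ α₀ M f) {a b : ℕ} (ha : a ≤ α₀.1) (hb : b ≤ α₀.2)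
    (hab : 1 ≤ a + b) {z : ℝ × ℝ} (hz : z ∈ S) :
    |mpw S a b f z| ≤ M * ((a + b - 1).factorial : ℝ) ^ s * (H₁ ^ a * H₂ ^ b) := by
  refine (hfM a ha b hb z hz).trans ?_
  obtain ⟨n, hn⟩ := Nat.exists_eq_add_of_le' hab
  rw [hn, Nat.add_sub_cancel]
  gcongr
  · exact gevreyWeight_nonneg _
  · exact gevreyWeight_succ_le_factorial n

end GevreyBound

section ClassA

variable {p₀ : ℝ} {f : ℝ × ℝ → ℝ}

theorem uniqueDiffOn_strip (hp₀ : p₀ < 0) : UniqueDiffOn ℝ (Strip p₀) := by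
  have strip_eq : Strip p₀ = univ ×ˢ Icc p₀ 0 := by
    ext z
    simp [Strip]
  rw [strip_eq]
  exact uniqueDiffOn_univ.prod (uniqueDiffOn_Icc hp₀)

theorem abs_le_supS (hf : bddS p₀ f) {z : ℝ × ℝ} (hz : z ∈ Strip p₀) : |f z| ≤ supS p₀ f :=
  le_csSup hf ⟨z, hz, rfl⟩

theorem supS_nonneg (p₀ : ℝ) (f : ℝ × ℝ → ℝ) : 0 ≤ supS p₀ f := by
  apply Real.sSup_nonneg
  rintro _ ⟨z, -, rfl⟩
  exact abs_nonneg _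

theorem supS_pd_le_cknorm (p₀ : ℝ) (f : ℝ × ℝ → ℝ) {a b k : ℕ} (hab : a + b ≤ k) :
    supS p₀ (pd p₀ a b f) ≤ cknorm p₀ k f :=
  calc supS p₀ (pd p₀ a b f)
      ≤ ∑ j ∈ Finset.range (k + 1 - a), supS p₀ (pd p₀ a j f) :=
        Finset.single_le_sum (f := fun j => supS p₀ (pd p₀ a j f))
          (fun j _ => supS_nonneg p₀ _) (Finset.mem_range.2 (by omega))
    _ ≤ cknorm p₀ k f :=
        Finset.single_le_sum (f := fun i => ∑ j ∈ Finset.range (k + 1 - i), supS p₀ (pd p₀ i j f))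
          (fun i _ => Finset.sum_nonneg fun j _ => supS_nonneg p₀ _)
          (Finset.mem_range.2 (by omega))

variable {μ s K H₁ H₂ : ℝ} {α₀ : ℕ × ℕ} {j k : ℕ}

theorem abs_pd_le_of_memA (hs : 0 ≤ s) (hH₁ : 1 ≤ H₁) (hH₂ : 1 ≤ H₂) (hj : 1 ≤ j) (hjk : j ≤ k)
    (hk : k ≤ α₀.1 + α₀.2) (hK : cknorm p₀ k f ≤ K) (hf : memA p₀ μ s H₁ H₂ α₀ j f) {a b : ℕ}
    (ha : a ≤ α₀.1) (hb : b ≤ α₀.2) {z : ℝ × ℝ} (hz : z ∈ Strip p₀) :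
    |pd p₀ a b f z| ≤ max K 1 * ((a + b - 2).factorial : ℝ) ^ s * (H₁ ^ a * H₂ ^ b) := by
  obtain ⟨⟨-, hbdd, -⟩, hA⟩ := hf
  have hfact : (1 : ℝ) ≤ ((a + b - 2).factorial : ℝ) ^ s :=
    Real.one_le_rpow (by exact_mod_cast Nat.factorial_pos _) hs
  have hpow : 1 ≤ H₁ ^ a * H₂ ^ b :=
    one_le_mul_of_one_le_of_one_le (one_le_pow₀ hH₁) (one_le_pow₀ hH₂)
  rcases le_or_gt (a + b) k with hab | hab
  · calc |pd p₀ a b f z|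
        ≤ max K 1 := (abs_le_supS (hbdd a b (hab.trans hk)) hz).trans
          ((supS_pd_le_cknorm p₀ f hab).trans (hK.trans (le_max_left _ _)))
      _ ≤ max K 1 * ((a + b - 2).factorial : ℝ) ^ s * (H₁ ^ a * H₂ ^ b) := by
          rw [mul_assoc]
          exact le_mul_of_one_le_right (by positivity) (one_le_mul_of_one_le_of_one_le hfact hpow)
  · calc |pd p₀ a b f z|
        ≤ H₁ ^ ((a : ℤ) - j) * H₂ ^ b * ((a + b - (j + 1)).factorial : ℝ) ^ s :=
          hA a b ha hb (by omega) z hz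
      _ ≤ H₁ ^ (a : ℤ) * H₂ ^ b * ((a + b - 2).factorial : ℝ) ^ s := by
          gcongr <;> omega
      _ = 1 * ((a + b - 2).factorial : ℝ) ^ s * (H₁ ^ a * H₂ ^ b) := by
          rw [zpow_natCast]; ring
      _ ≤ max K 1 * ((a + b - 2).factorial : ℝ) ^ s * (H₁ ^ a * H₂ ^ b) := by
          gcongr
          exact le_max_right _ _

theorem gevreyBound_of_memA (hs : 0 ≤ s) (hH₁ : 1 ≤ H₁) (hH₂ : 1 ≤ H₂) (hj : 1 ≤ j) (hjk : j ≤ k)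
    (hk : k ≤ α₀.1 + α₀.2) (hK : cknorm p₀ k f ≤ K) (hf : memA p₀ μ s H₁ H₂ α₀ j f) :
    GevreyBound (Strip p₀) s H₁ H₂ α₀ (max K 1 * 5 ^ s) f := by
  intro a ha b hb z hz
  refine (abs_pd_le_of_memA hs hH₁ hH₂ hj hjk hk hK hf ha hb hz).trans ?_
  rw [mul_assoc (max K 1) (5 ^ s), ← Real.mul_rpow (by norm_num) (gevreyWeight_nonneg _)]
  gcongr
  exact factorial_sub_two_le_gevreyWeight _

end ClassA

theorem memA_two_one_one_mul_general (s K : ℝ) (hs : 1 ≤ s) :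
    ∃ c : ℝ, 1 ≤ c ∧ ∀ (p₀ μ : ℝ) (α₀ : ℕ × ℕ) (H₁ H₂ : ℝ) (i j l k : ℕ) (u v w : ℝ × ℝ → ℝ),
      p₀ < 0 → k ≤ α₀.1 + α₀.2 → 1 ≤ H₁ → 1 ≤ H₂ →
      i ∈ Icc 1 k → j ∈ Icc 1 k → l ∈ Icc 1 k →
      cknorm p₀ k u ≤ K → cknorm p₀ k v ≤ K → cknorm p₀ k w ≤ K →
      memA p₀ μ s H₁ H₂ α₀ i u → memA p₀ μ s H₁ H₂ α₀ j v → memA p₀ μ s H₁ H₂ α₀ l w →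
      ∀ a b : ℕ, a ≤ α₀.1 → b ≤ α₀.2 → 1 ≤ a + b → ∀ z ∈ Strip p₀,
        |pd p₀ a b (fun y => u y * v y * w y) z| ≤
          c * H₁ ^ a * H₂ ^ b * (Nat.factorial (a + b - 1) : ℝ) ^ s := by
  have hs₀ : 0 ≤ s := by linarith
  set M : ℝ := max K 1 * 5 ^ s with hM_def
  have hM : 1 ≤ M := one_le_mul_of_one_le_of_one_le (le_max_right _ _)
    (Real.one_le_rpow (by norm_num) hs₀)
  have h8 : (1 : ℝ) ≤ 8 ^ s := Real.one_le_rpow (by norm_num) hs₀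
  refine ⟨(8 ^ s) ^ 2 * M ^ 3, one_le_mul_of_one_le_of_one_le (one_le_pow₀ h8) (one_le_pow₀ hM), ?_⟩
  intro p₀ μ α₀ H₁ H₂ i j l k u v w hp₀ hk hH₁ hH₂ hi hj hl hu hv hw hAu hAv hAw a b ha hb hab z hz
  have hS := uniqueDiffOn_strip hp₀
  have hMu := gevreyBound_of_memA hs₀ hH₁ hH₂ hi.1 hi.2 hk hu hAu
  have hMv := gevreyBound_of_memA hs₀ hH₁ hH₂ hj.1 hj.2 hk hv hAv
  have hMw := gevreyBound_of_memA hs₀ hH₁ hH₂ hl.1 hl.2 hk hw hAw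
  rw [← hM_def] at hMu hMv hMw
  have hH₁₀ : 0 ≤ H₁ := by linarith
  have hH₂₀ : 0 ≤ H₂ := by linarith
  have hMuv := hMu.mul hS hs hH₁₀ hH₂₀ (by positivity) (by positivity) hAu.1.1 hAv.1.1 hMv
  have hMuvw := hMuv.mul hS hs hH₁₀ hH₂₀ (by positivity) (by positivity)
    (hAu.1.1.mul hAv.1.1) hAw.1.1 hMw
  exact (hMuvw.abs_mpw_le_factorial hs₀ hH₁₀ hH₂₀ (by positivity) ha hb hab hz).trans_eq (by ring)

/-- If `u ∈ 𝒜₂` and `v, w ∈ 𝒜₁` then `c_*⁻¹ uvw ∈ 𝒜₀` for a constant `c_*` depending only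
on the `C²`-norms of `u, v, w` (and independent of `α₀, H₁, H₂`). -/
theorem memA_two_one_one_mul (p₀ μ s K : ℝ) (hp₀ : p₀ < 0) (hμ : μ ∈ Set.Ioo (0 : ℝ) 1)
    (hs : 1 ≤ s) :
    ∃ c : ℝ, 1 ≤ c ∧ ∀ (α₀ : ℕ × ℕ) (H₁ H₂ : ℝ) (u v w : ℝ × ℝ → ℝ),
      3 ≤ α₀.1 + α₀.2 → 1 ≤ H₁ → H₁ ≤ H₂ →
      cknorm p₀ 2 u ≤ K → cknorm p₀ 2 v ≤ K → cknorm p₀ 2 w ≤ K →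
      memA p₀ μ s H₁ H₂ α₀ 2 u → memA p₀ μ s H₁ H₂ α₀ 1 v → memA p₀ μ s H₁ H₂ α₀ 1 w →
      ∀ a b : ℕ, a ≤ α₀.1 → b ≤ α₀.2 → 1 ≤ a + b → ∀ z ∈ Strip p₀,
        |pd p₀ a b (fun y => u y * v y * w y) z| ≤
          c * H₁ ^ a * H₂ ^ b * (Nat.factorial (a + b - 1) : ℝ) ^ s := by
  obtain ⟨c, hc, h⟩ := memA_two_one_one_mul_general s K hs
  exact ⟨c, hc, fun α₀ H₁ H₂ u v w hα hH₁ hH₁₂ => h p₀ μ α₀ H₁ H₂ 2 1 1 2 u v w hp₀ (by omega)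
    hH₁ (hH₁.trans hH₁₂) (by simp) (by simp) (by simp)⟩
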